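/- arXiv:1004.4020 — 2 statements merged into one kernel-verified Lean document; each statement's English description precedes it below -/
import Mathlib

section
/- Let g be a probability density function on the real numbers satisfying the symmetry condition g(-l) = e^{-l} g(l) for almost all l. Let X be uniformly distributed on {+1, -1} and let L be a real random variable whose conditional density given X = +1 is g(l) and whose conditional density given X = -1 is g(-l). Then the mutual information (in bits) between X and L equals I(X;L) = ∫_0^∞ g(l) [ e^{-l} log₂(2/(1+e^l)) + log₂(2/(1+e^{-l})) ] dl. In particular, I(X;L) is a linear functional of the density g. -/
open MeasureTheory Real

/-- The integrand of the mutual information (in bits) between a uniform binary input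
`X ∈ {+1,-1}` and a real output `L` whose conditional density given `X = +1` is `g(l)`
and given `X = -1` is `g(-l)`.  The marginal density of `L` is `(g(l) + g(-l))/2`. -/
noncomputable def mibIntegrand (g : ℝ → ℝ) (l : ℝ) : ℝ :=
  g l / 2 * Real.logb 2 (2 * g l / (g l + g (-l)))
    + g (-l) / 2 * Real.logb 2 (2 * g (-l) / (g l + g (-l)))

/-- Mutual information (in bits) `I(X;L)` of the binary-input symmetric channel with
conditional density `g(l) = p_{L|X}(l|+1)` and uniform input. -/
noncomputable def mutualInfoBits (g : ℝ → ℝ) : ℝ := ∫ l : ℝ, mibIntegrand g l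

/-! The mutual-information integrand is even, so its integral over the line is twice its integral
over the positive half-line. The symmetry condition reads `p(l | -1) = e^{-l} p(l | +1)`; hence the
posteriors `1 / (1 + e^{-l})` of `+1` and `1 / (1 + e^l)` of `-1` depend on `l` alone, and `g`
appears only as a factor outside the logarithms. -/

theorem integral_eq_two_mul_setIntegral_Ioi_of_even {f : ℝ → ℝ} (hf : f.Even) :
    ∫ x, f x = 2 * ∫ x in Set.Ioi (0 : ℝ), f x := by
  have f_abs (x : ℝ) : f |x| = f x := by
    rcases abs_choice x with h | h <;> simp only [h, hf.eq]
  simpa only [f_abs] using integral_comp_abs (f := f)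

theorem mul_div_add_mul_self {K : Type*} [DivisionRing K] {x : K} (hx : x ≠ 0) (a c : K) :
    a * x / (x + c * x) = a / (1 + c) := by
  rw [← one_add_mul, mul_div_mul_right _ _ hx]

theorem mibIntegrand_even (g : ℝ → ℝ) : (mibIntegrand g).Even := fun l ↦ by
  simp only [mibIntegrand, neg_neg, add_comm]

theorem mibIntegrand_eq_of_symmetric {g : ℝ → ℝ} {l : ℝ} (h : g (-l) = exp (-l) * g l) :
    mibIntegrand g l
      = g l * (exp (-l) * logb 2 (2 / (1 + exp l)) + logb 2 (2 / (1 + exp (-l)))) / 2 := by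
  rcases eq_or_ne (g l) 0 with hl | hl
  · simp [mibIntegrand, h, hl]
  have hl' : g (-l) ≠ 0 := h ▸ mul_ne_zero (exp_ne_zero _) hl
  have h' : g l = exp l * g (-l) := by
    rw [h, ← mul_assoc, ← exp_add, add_neg_cancel, exp_zero, one_mul]
  have ratio_pos : 2 * g l / (g l + g (-l)) = 2 / (1 + exp (-l)) := by
    rw [h, mul_div_add_mul_self hl]
  have ratio_neg : 2 * g (-l) / (g l + g (-l)) = 2 / (1 + exp l) := by
    rw [add_comm, h', mul_div_add_mul_self hl']
  rw [mibIntegrand, ratio_pos, ratio_neg, h]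
  ring

theorem mutualInfo_eq_integral_of_symmetric_general {g : ℝ → ℝ}
    (hsym : ∀ᵐ l : ℝ, g (-l) = exp (-l) * g l) (hint : Integrable (mibIntegrand g)) :
    IntegrableOn
        (fun l ↦ g l * (exp (-l) * logb 2 (2 / (1 + exp l)) + logb 2 (2 / (1 + exp (-l)))))
        (Set.Ioi 0) ∧
      mutualInfoBits g
        = ∫ l in Set.Ioi (0 : ℝ),
            g l * (exp (-l) * logb 2 (2 / (1 + exp l)) + logb 2 (2 / (1 + exp (-l)))) := by
  have half_line : (fun l ↦ 2 * mibIntegrand g l) =ᵐ[volume.restrict (Set.Ioi 0)]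
      fun l ↦ g l * (exp (-l) * logb 2 (2 / (1 + exp l)) + logb 2 (2 / (1 + exp (-l)))) := by
    filter_upwards [ae_restrict_of_ae hsym] with l hl
    rw [mibIntegrand_eq_of_symmetric hl, mul_div_cancel₀ _ two_ne_zero]
  constructor
  · exact (hint.integrableOn.const_mul 2).congr half_line
  · rw [mutualInfoBits, integral_eq_two_mul_setIntegral_Ioi_of_even (mibIntegrand_even g),
      ← integral_const_mul, integral_congr_ae half_line]

/-- If the density `g` satisfies the L-value symmetry condition `g(-l) = e^{-l} g(l)`
for almost all `l`, then
`I(X;L) = ∫_0^∞ g(l) [ e^{-l} log₂(2/(1+e^l)) + log₂(2/(1+e^{-l})) ] dl`,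
a linear functional of `g`. -/
theorem mutualInfo_eq_integral_of_symmetric (g : ℝ → ℝ)
    (hmeas : Measurable g) (hnonneg : ∀ l, 0 ≤ g l)
    (hpdf : ∫ l : ℝ, g l = 1)
    (hsym : ∀ᵐ l : ℝ ∂volume, g (-l) = Real.exp (-l) * g l)
    (hint : Integrable (mibIntegrand g)) :
    mutualInfoBits g
      = ∫ l in Set.Ioi (0 : ℝ),
          g l * (Real.exp (-l) * Real.logb 2 (2 / (1 + Real.exp l))
                  + Real.logb 2 (2 / (1 + Real.exp (-l)))) :=
  (mutualInfo_eq_integral_of_symmetric_general hsym hint).2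
end

section
/- (Mixing of EXIT functions.) Let {g_i} be a finite collection of probability density functions on ℝ, each satisfying the symmetry condition g_i(-l) = e^{-l} g_i(l) almost everywhere, and let λ_i ≥ 0 with Σ_i λ_i = 1. For each i, let X_i be uniform on {+1,-1} and L_i have conditional density g_i(l) given X_i = +1 and g_i(-l) given X_i = -1. Let X̄ be uniform on {+1,-1} and L̄ have conditional density ḡ(l) = Σ_i λ_i g_i(l) given X̄ = +1 and ḡ(-l) given X̄ = -1. Then Σ_i λ_i I(X_i; L_i) = I(X̄; L̄), i.e., the average of the mutual informations of the component channels equals the mutual information of the averaged channel. -/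
open MeasureTheory Real

/-!
The integrand of the mutual information at `l` is homogeneous of degree one in the pair
`(g l, g (-l))`. The symmetry condition says that this pair is `g l` times a vector depending on `l`
alone, so the integrand is `g l` times a universal kernel: it is linear in `g`, and `I(X;L)` is a
linear functional on symmetric densities.
-/

/-- The information kernel of symmetric channels, in bits: the factor by which a symmetric density
at the L-value `l` has to be multiplied to get the integrand of the mutual information. The two
logarithms are `1 + log₂` of the posterior probabilities `1 / (1 + e^{∓l})` of `X = ±1` given
`L = l`. -/
noncomputable def mibKernel (l : ℝ) : ℝ :=
  1 / 2 * logb 2 (2 / (1 + exp (-l))) + exp (-l) / 2 * logb 2 (2 / (1 + exp l))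

lemma mibIntegrand_eq_mul_mibKernel {g : ℝ → ℝ} {l : ℝ} (hsym : g (-l) = exp (-l) * g l) :
    mibIntegrand g l = g l * mibKernel l := by
  rcases eq_or_ne (g l) 0 with hzero | hne
  · simp [mibIntegrand, hsym, hzero]
  · have hpos : 2 * g l / (g l + g (-l)) = 2 / (1 + exp (-l)) := by
      rw [hsym]
      field_simp
    have hneg : 2 * g (-l) / (g l + g (-l)) = 2 / (1 + exp l) := by
      rw [hsym, exp_neg]
      field_simp
      ring
    rw [mibIntegrand, hpos, hneg, hsym, mibKernel]
    ring

section Mixture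

variable {ι : Type*} {s : Finset ι} {g : ι → ℝ → ℝ}

lemma sum_mul_apply_neg_of_symm {l : ℝ} (lam : ι → ℝ)
    (hsym : ∀ i ∈ s, g i (-l) = exp (-l) * g i l) :
    ∑ i ∈ s, lam i * g i (-l) = exp (-l) * ∑ i ∈ s, lam i * g i l := by
  rw [Finset.mul_sum]
  refine Finset.sum_congr rfl fun i hi => ?_
  rw [hsym i hi, mul_left_comm]

lemma mibIntegrand_sum_mul {l : ℝ} (lam : ι → ℝ)
    (hsym : ∀ i ∈ s, g i (-l) = exp (-l) * g i l) :
    mibIntegrand (fun x => ∑ i ∈ s, lam i * g i x) l = ∑ i ∈ s, lam i * mibIntegrand (g i) l := by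
  rw [mibIntegrand_eq_mul_mibKernel (sum_mul_apply_neg_of_symm lam hsym), Finset.sum_mul]
  refine Finset.sum_congr rfl fun i hi => ?_
  rw [mibIntegrand_eq_mul_mibKernel (hsym i hi), mul_assoc]

theorem mixing_of_exit_functions_general (lam : ι → ℝ)
    (hsym : ∀ i ∈ s, ∀ᵐ l : ℝ, g i (-l) = exp (-l) * g i l)
    (hint : ∀ i ∈ s, Integrable (mibIntegrand (g i))) :
    ∑ i ∈ s, lam i * mutualInfoBits (g i) = mutualInfoBits (fun l => ∑ i ∈ s, lam i * g i l) := by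
  have hmix : mibIntegrand (fun l => ∑ i ∈ s, lam i * g i l)
      =ᵐ[volume] fun l => ∑ i ∈ s, lam i * mibIntegrand (g i) l := by
    filter_upwards [(Finset.eventually_all s).2 hsym] with l hl
    exact mibIntegrand_sum_mul lam hl
  calc ∑ i ∈ s, lam i * mutualInfoBits (g i)
      = ∑ i ∈ s, ∫ l, lam i * mibIntegrand (g i) l := by
        simp only [mutualInfoBits, integral_const_mul]
    _ = ∫ l, ∑ i ∈ s, lam i * mibIntegrand (g i) l :=
        (integral_finsetSum s fun i hi => (hint i hi).const_mul (lam i)).symm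
    _ = mutualInfoBits (fun l => ∑ i ∈ s, lam i * g i l) := (integral_congr_ae hmix).symm

end Mixture

/-- Mixing of EXIT functions: for a finite collection of symmetric binary-input channels
with densities `gᵢ` and weights `λᵢ ≥ 0`, `Σᵢ λᵢ = 1`, the average of the mutual
informations equals the mutual information of the averaged channel
`ḡ(l) = Σᵢ λᵢ gᵢ(l)`. -/
theorem mixing_of_exit_functions (n : ℕ) (g : Fin n → ℝ → ℝ) (lam : Fin n → ℝ)
    (hmeas : ∀ i, Measurable (g i)) (hnonneg : ∀ i l, 0 ≤ g i l)
    (hpdf : ∀ i, ∫ l : ℝ, g i l = 1)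
    (hsym : ∀ i, ∀ᵐ l : ℝ ∂volume, g i (-l) = Real.exp (-l) * g i l)
    (hlam0 : ∀ i, 0 ≤ lam i) (hlam1 : ∑ i, lam i = 1)
    (hint : ∀ i, Integrable (mibIntegrand (g i)))
    (hintmix : Integrable (mibIntegrand (fun l => ∑ i, lam i * g i l))) :
    ∑ i, lam i * mutualInfoBits (g i)
      = mutualInfoBits (fun l => ∑ i, lam i * g i l) := by
  exact mixing_of_exit_functions_general lam (fun i _ => hsym i) fun i _ => hint i
end
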